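/- arXiv:math/0506278 — 2 statements merged into one kernel-verified Lean document; each statement's English description precedes it below -/
import Mathlib

section
/- Let q be a real number with 0 < q < 1 and let n ≥ 1 be an integer. Then the q-Genocchi numbers are expressed through the q-Bernoulli numbers by G_{n,q} = [2]_q·B_{n,q} − 2·[2]_q^n·B_{n,q²}. -/
open Finset Filter

/-- The q-analogue `[x]_q = (1 - q^x)/(1 - q)` with real exponent. -/
noncomputable def qb (q x : ℝ) : ℝ := (1 - q ^ x) / (1 - q)

/-- q-Euler polynomial `E_{n,q}(x) = [2]_q ∑_{k≥0} (-1)^k q^k [k+x]_q^n`. -/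
noncomputable def qEulerPoly (q : ℝ) (n : ℕ) (x : ℝ) : ℝ :=
  (1 + q) * ∑' k : ℕ, (-1 : ℝ) ^ k * q ^ k * qb q ((k : ℝ) + x) ^ n

/-- q-Euler number `E_{n,q} = E_{n,q}(0)`. -/
noncomputable def qEuler (q : ℝ) (n : ℕ) : ℝ := qEulerPoly q n 0

/-- q-Genocchi polynomial `G_{n,q}(x) = n[2]_q ∑_{k≥0} (-1)^k q^{k+x} [k+x]_q^{n-1}`,
with `G_{0,q}(x) = 0` (via the factor `n`). -/
noncomputable def qGenocchiPoly (q : ℝ) (n : ℕ) (x : ℝ) : ℝ :=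
  (n : ℝ) * (1 + q) * ∑' k : ℕ, (-1 : ℝ) ^ k * q ^ ((k : ℝ) + x) * qb q ((k : ℝ) + x) ^ (n - 1)

/-- q-Genocchi number `G_{n,q} = G_{n,q}(0)`. -/
noncomputable def qGenocchi (q : ℝ) (n : ℕ) : ℝ := qGenocchiPoly q n 0

/-- q-Bernoulli number `B_{n,q} = -n ∑_{k≥0} q^k [k]_q^{n-1}` (for `n ≥ 1`). -/
noncomputable def qBernoulli (q : ℝ) (n : ℕ) : ℝ :=
  -(n : ℝ) * ∑' k : ℕ, q ^ k * qb q (k : ℝ) ^ (n - 1)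

theorem q_genocchi_eq_q_bernoulli_combination (q : ℝ) (hq0 : 0 < q) (hq1 : q < 1)
    (n : ℕ) (hn : 1 ≤ n) :
    qGenocchi q n = (1 + q) * qBernoulli q n - 2 * (1 + q) ^ n * qBernoulli (q ^ 2) n := by
  obtain ⟨m, rfl⟩ : ∃ m, n = m + 1 := ⟨n - 1, by omega⟩
  set a : ℕ → ℝ := fun k => q ^ k * ((1 - q ^ k) / (1 - q)) ^ m with ha
  have h1q : 0 < 1 - q := by linarith
  have hsum : Summable a := by
    have hg : Summable (fun k : ℕ => q ^ k * (1 / (1 - q)) ^ m) :=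
      (summable_geometric_of_lt_one hq0.le hq1).mul_right _
    refine Summable.of_nonneg_of_le (fun k => ?_) (fun k => ?_) hg
    · have : q ^ k ≤ 1 := pow_le_one₀ hq0.le hq1.le
      have h2 : 0 ≤ 1 - q ^ k := by linarith
      simp only [ha]
      positivity
    · have : q ^ k ≤ 1 := pow_le_one₀ hq0.le hq1.le
      have h2 : 0 ≤ 1 - q ^ k := by linarith
      have h3 : 0 < q ^ k := by positivity
      simp only [ha]
      gcongr
      linarith
  have he : Summable (fun k => a (2 * k)) :=
    hsum.comp_injective (fun x y h => by simpa using h)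
  have ho : Summable (fun k => a (2 * k + 1)) :=
    hsum.comp_injective (fun x y h => by simpa using h)
  have hS : ∑' k, a (2 * k) + ∑' k, a (2 * k + 1) = ∑' k, a k := tsum_even_add_odd he ho
  have hA : ∑' k, a (2 * k) + -∑' k, a (2 * k + 1) = ∑' k, (-1 : ℝ) ^ k * a k := by
    rw [← tsum_even_add_odd (f := fun k => (-1 : ℝ) ^ k * a k)]
    · simp [pow_succ, pow_mul, tsum_neg]
    · simpa [pow_mul] using he
    · simpa [pow_succ, pow_mul] using ho.neg
  have hG : qGenocchi q (m + 1) = ((m : ℝ) + 1) * (1 + q) * ∑' k, (-1 : ℝ) ^ k * a k := by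
    simp [qGenocchi, qGenocchiPoly, qb, ha, mul_assoc]
  have hB : qBernoulli q (m + 1) = -((m : ℝ) + 1) * ∑' k, a k := by
    simp only [qBernoulli, qb, ha, Real.rpow_natCast, Nat.add_sub_cancel]
    push_cast
    rfl
  have hB2 : (1 + q) ^ m * qBernoulli (q ^ 2) (m + 1)
      = -((m : ℝ) + 1) * ∑' k, a (2 * k) := by
    have : ∑' k, a (2 * k)
        = (1 + q) ^ m * ∑' k : ℕ, (q ^ 2) ^ k * ((1 - (q ^ 2) ^ k) / (1 - q ^ 2)) ^ m := by
      rw [← tsum_mul_left]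
      refine tsum_congr (fun k => ?_)
      have h4 : (1 - q ^ (2 * k)) / (1 - q) = (1 + q) * ((1 - (q ^ 2) ^ k) / (1 - q ^ 2)) := by
        have h5 : 1 - q ^ 2 = (1 - q) * (1 + q) := by ring
        have h6 : 1 + q ≠ 0 := by positivity
        rw [h5, pow_mul]
        field_simp
      simp only [ha]
      rw [h4, mul_pow, pow_mul]
      ring
    rw [this]
    simp only [qBernoulli, qb, Real.rpow_natCast, Nat.add_sub_cancel]
    push_cast
    ring
  have key : 2 * (1 + q) ^ (m + 1) * qBernoulli (q ^ 2) (m + 1)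
      = 2 * (1 + q) * ((1 + q) ^ m * qBernoulli (q ^ 2) (m + 1)) := by ring
  rw [key, hB2, hG, hB, ← hA, ← hS]
  ring
end

section
/- Let n ≥ 1 be an integer. Then, as the real parameter q tends to 1 from below, the q-Genocchi numbers tend to the classical Genocchi numbers: lim_{q→1⁻} G_{n,q} = 2·(1 − 2^n)·bernoulli(n). -/
open Finset Filter

/-- Rational limits of the alternating sums. -/
noncomputable def genE (m : ℕ) : ℚ := (1 - 2 ^ (m + 1)) * bernoulli (m + 1) / (m + 1)

lemma genE_series :
    (PowerSeries.mk fun m => genE m / (m.factorial : ℚ)) * (PowerSeries.exp ℚ + 1) = 1 := by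
  set B := bernoulliPowerSeries ℚ with hB
  set e := PowerSeries.exp ℚ with he
  set E : PowerSeries ℚ := PowerSeries.mk fun m => genE m / (m.factorial : ℚ) with hE
  have h1 : B * (e - 1) = PowerSeries.X := bernoulliPowerSeries_mul_exp_sub_one ℚ
  have he2 : PowerSeries.rescale (2 : ℚ) e = e ^ 2 := by
    have := PowerSeries.exp_pow_eq_rescale_exp (A := ℚ) 2
    rw [he, this]; norm_num
  have hX : PowerSeries.rescale (2 : ℚ) PowerSeries.X = 2 * (PowerSeries.X : PowerSeries ℚ) := by
    rw [PowerSeries.rescale_X]; rfl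
  have h2 : PowerSeries.rescale (2 : ℚ) B * (e ^ 2 - 1) = 2 * PowerSeries.X := by
    have := congrArg (PowerSeries.rescale (2 : ℚ)) h1
    rw [map_mul, map_sub, map_one, he2, hX] at this
    exact this
  have hne : e - 1 ≠ 0 := by
    intro h
    rw [h, mul_zero] at h1
    exact PowerSeries.X_ne_zero h1.symm
  have h3 : PowerSeries.rescale (2 : ℚ) B * (e + 1) = 2 * B := by
    apply mul_right_cancel₀ hne
    linear_combination h2 - 2 * h1
  have h4 : PowerSeries.X * E = B - PowerSeries.rescale (2 : ℚ) B := by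
    ext n
    cases n with
    | zero =>
      rw [PowerSeries.coeff_zero_X_mul, map_sub, PowerSeries.coeff_rescale]
      simp
    | succ n =>
      rw [PowerSeries.coeff_succ_X_mul, map_sub, PowerSeries.coeff_rescale, hE, hB,
        bernoulliPowerSeries, PowerSeries.coeff_mk, PowerSeries.coeff_mk, genE,
        Nat.factorial_succ]
      have : (n.factorial : ℚ) ≠ 0 := by positivity
      have : (n + 1 : ℚ) ≠ 0 := by positivity
      simp only [eq_ratCast, Rat.cast_id]
      push_cast
      field_simp
  apply mul_left_cancel₀ (PowerSeries.X_ne_zero (R := ℚ))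
  linear_combination (e + 1) * h4 - h3 + h1

lemma genE_rec (m : ℕ) :
    ∑ j ∈ range (m + 1), (m.choose j : ℚ) * genE j + genE m = if m = 0 then 1 else 0 := by
  have h := congrArg (PowerSeries.coeff m) genE_series
  rw [mul_add, mul_one, map_add, PowerSeries.coeff_mul, PowerSeries.coeff_mk,
    PowerSeries.coeff_one, Finset.Nat.sum_antidiagonal_eq_sum_range_succ_mk] at h
  have hm : (m.factorial : ℚ) ≠ 0 := by positivity
  have h' := congrArg (fun x => (m.factorial : ℚ) * x) h
  simp only [mul_add, Finset.mul_sum] at h'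
  have r : (m.factorial : ℚ) * (if m = 0 then 1 else 0) = if m = 0 then 1 else 0 := by
    split_ifs with h0
    · simp [h0]
    · simp
  rw [r] at h'
  rw [← h']
  congr 1
  · apply Finset.sum_congr rfl
    intro j hj
    have hj' : j ≤ m := by simpa [Nat.lt_succ_iff] using hj
    rw [PowerSeries.coeff_mk, PowerSeries.coeff_exp, Nat.cast_choose ℚ hj']
    have a1 : (j.factorial : ℚ) ≠ 0 := by positivity
    have a2 : ((m - j).factorial : ℚ) ≠ 0 := by positivity
    simp only [eq_ratCast, Rat.cast_id]
    field_simp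
  · field_simp

/-- The alternating sums. -/
noncomputable def qS (m : ℕ) (q : ℝ) : ℝ :=
  ∑' k : ℕ, (-1 : ℝ) ^ k * q ^ k * ((1 - q ^ k) / (1 - q)) ^ m

lemma qS_summable (m : ℕ) {q : ℝ} (h0 : 0 < q) (h1 : q < 1) :
    Summable fun k : ℕ => (-1 : ℝ) ^ k * q ^ k * ((1 - q ^ k) / (1 - q)) ^ m := by
  refine Summable.of_norm_bounded
    ((summable_geometric_of_lt_one h0.le h1).mul_right ((1 / (1 - q)) ^ m)) ?_
  intro k
  have hq : 0 < 1 - q := by linarith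
  have hk : q ^ k ≤ 1 := pow_le_one₀ h0.le h1.le
  have hk0 : 0 < q ^ k := pow_pos h0 k
  have hb : 0 ≤ (1 - q ^ k) / (1 - q) := div_nonneg (by linarith) hq.le
  rw [norm_mul, norm_mul, norm_pow, norm_neg, norm_one, one_pow, one_mul,
    Real.norm_of_nonneg hk0.le, Real.norm_of_nonneg (pow_nonneg hb m)]
  gcongr
  linarith

lemma qS_rec (m : ℕ) {q : ℝ} (h0 : 0 < q) (h1 : q < 1) :
    qS m q = (if m = 0 then 1 else 0)
      - q * ∑ j ∈ range (m + 1), (m.choose j : ℝ) * q ^ j * qS j q := by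
  have hq : (1 - q) ≠ 0 := by linarith
  rw [qS, (qS_summable m h0 h1).tsum_eq_zero_add, sub_eq_add_neg]
  congr 1
  · simp [zero_pow_eq]
  · have hs : ∀ j ∈ range (m + 1), Summable fun k : ℕ => (m.choose j : ℝ) * q ^ j *
        ((-1 : ℝ) ^ k * q ^ k * ((1 - q ^ k) / (1 - q)) ^ j) :=
      fun j _ => (qS_summable j h0 h1).mul_left _
    simp only [qS, ← tsum_mul_left]
    rw [← Summable.tsum_finsetSum hs, ← tsum_mul_left, ← tsum_neg]
    congr 1
    ext k
    have hb : (1 - q ^ (k + 1)) / (1 - q) = q * ((1 - q ^ k) / (1 - q)) + 1 := by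
      field_simp
      ring
    rw [hb, add_pow, Finset.mul_sum, Finset.mul_sum, ← Finset.sum_neg_distrib]
    apply Finset.sum_congr rfl
    intro j _
    rw [mul_pow q]
    ring

lemma qS_tendsto (m : ℕ) :
    Tendsto (qS m) (nhdsWithin 1 (Set.Ioo 0 1)) (nhds ((genE m : ℚ) : ℝ)) := by
  induction m using Nat.strong_induction_on with
  | _ m ih =>
    have hid : Tendsto (fun q : ℝ => q) (nhdsWithin 1 (Set.Ioo 0 1)) (nhds 1) :=
      tendsto_nhdsWithin_of_tendsto_nhds tendsto_id
    have key : Tendsto (fun q : ℝ => ((if m = 0 then 1 else 0)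
        - q * ∑ j ∈ range m, (m.choose j : ℝ) * q ^ j * qS j q) / (1 + q ^ (m + 1)))
        (nhdsWithin 1 (Set.Ioo 0 1))
        (nhds (((if m = 0 then 1 else 0)
        - 1 * ∑ j ∈ range m, (m.choose j : ℝ) * 1 ^ j * ((genE j : ℚ) : ℝ))
          / (1 + 1 ^ (m + 1)))) := by
      refine Tendsto.div (tendsto_const_nhds.sub (hid.mul (tendsto_finsetSum _ ?_)))
        (tendsto_const_nhds.add (hid.pow _)) (by norm_num)
      intro j hj
      exact (tendsto_const_nhds.mul (hid.pow _)).mul (ih j (by simpa using hj))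
    have hlim : ((if m = 0 then 1 else 0)
        - 1 * ∑ j ∈ range m, (m.choose j : ℝ) * 1 ^ j * ((genE j : ℚ) : ℝ))
          / (1 + 1 ^ (m + 1)) = ((genE m : ℚ) : ℝ) := by
      have h := congrArg (fun x : ℚ => (x : ℝ)) (genE_rec m)
      rw [Finset.sum_range_succ, Nat.choose_self] at h
      push_cast at h
      simp only [one_pow, mul_one]
      have hc : (((if m = 0 then 1 else 0 : ℚ)) : ℝ) = if m = 0 then 1 else 0 := by
        split_ifs <;> simp
      rw [hc] at h
      rw [← h]
      ring
    rw [hlim] at key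
    refine key.congr' ?_
    filter_upwards [self_mem_nhdsWithin] with q hq
    have h := qS_rec m hq.1 hq.2
    rw [Finset.sum_range_succ, Nat.choose_self] at h
    have hp : 0 < q ^ (m + 1) := pow_pos hq.1 _
    rw [div_eq_iff (by linarith)]
    push_cast at h
    rw [pow_succ]
    linear_combination -h

theorem q_genocchi_tendsto_genocchi (n : ℕ) (hn : 1 ≤ n) :
    Filter.Tendsto (fun q : ℝ => qGenocchi q n) (nhdsWithin 1 (Set.Ioo 0 1))
      (nhds ((2 * (1 - 2 ^ n) * bernoulli n : ℚ) : ℝ)) := by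
  obtain ⟨m, rfl⟩ : ∃ m, n = m + 1 := ⟨n - 1, by omega⟩
  have hid : Tendsto (fun q : ℝ => q) (nhdsWithin 1 (Set.Ioo 0 1)) (nhds 1) :=
    tendsto_nhdsWithin_of_tendsto_nhds tendsto_id
  have h := ((tendsto_const_nhds (x := ((m + 1 : ℕ) : ℝ))).mul
    ((tendsto_const_nhds (x := (1 : ℝ))).add hid)).mul (qS_tendsto m)
  have e1 : ((m + 1 : ℕ) : ℝ) * (1 + 1) * ((genE m : ℚ) : ℝ)
      = ((2 * (1 - 2 ^ (m + 1)) * bernoulli (m + 1) : ℚ) : ℝ) := by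
    have : (m + 1 : ℝ) ≠ 0 := by positivity
    rw [genE]
    push_cast
    field_simp
    ring
  rw [e1] at h
  refine h.congr ?_
  intro q
  simp [qGenocchi, qGenocchiPoly, qS, qb]
end
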